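/- arXiv:1312.7516 — 4 statements merged into one kernel-verified Lean document; each statement's English description precedes it below -/
import Mathlib

section
/- For every integer d ≥ 0 there exists a polynomial q with rational coefficients of degree exactly 2d, with leading coefficient 1/(2^d · d!) (that is, 1/(2d)!!), such that q(ν) = S(ν+d, ν) for every positive integer ν. -/
/-- The Stirling number of the second kind `S(p, q)`: the number of partitions of a
set with `p` elements into `q` nonempty blocks. -/
noncomputable def stirlingSecond (p q : ℕ) : ℕ :=
  Nat.card {P : Finpartition (Finset.univ : Finset (Fin p)) // P.parts.card = q}

theorem fp_sup_erase {α : Type*} [DecidableEq α] {s : Finset α} (P : Finpartition s)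
    (B : Finset α) (hB : B ∈ P.parts) : (P.parts.erase B).sup id = s \ B := by
  ext x
  simp only [Finset.mem_sup, Finset.mem_erase, id, Finset.mem_sdiff]
  constructor
  · rintro ⟨C, ⟨hne, hC⟩, hx⟩
    exact ⟨P.subset hC hx, fun hxB => hne (P.eq_of_mem_parts hC hB hx hxB)⟩
  · rintro ⟨hx, hxB⟩
    obtain ⟨C, hC, hxC⟩ := P.exists_mem hx
    exact ⟨C, ⟨fun h => hxB (h ▸ hxC), hC⟩, hxC⟩

def fpNew {α : Type*} [DecidableEq α] {s : Finset α} (a : α) (ha : a ∉ s)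
    (P : Finpartition s) : Finpartition (insert a s) :=
  P.extend (b := {a}) (by simp) (by simpa using ha) (by ext; simp [or_comm])

def fpIns {α : Type*} [DecidableEq α] {s : Finset α} (a : α) (ha : a ∉ s)
    (P : Finpartition s) (B : Finset α) (hB : B ∈ P.parts) : Finpartition (insert a s) :=
  (P.ofSubset (Finset.erase_subset B P.parts) (fp_sup_erase P B hB)).extend
    (b := insert a B) (by simp)
    (by
      rw [Finset.disjoint_left]
      intro x hx hx'
      simp only [Finset.mem_sdiff, Finset.mem_insert] at hx hx'
      rcases hx' with rfl | h
      · exact ha hx.1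
      · exact hx.2 h)
    (by
      have := P.subset hB
      ext x
      have := @this x
      simp only [Finset.sup_eq_union, Finset.mem_union, Finset.mem_sdiff, Finset.mem_insert]
      tauto)

theorem fpNew_parts {α : Type*} [DecidableEq α] {s : Finset α} (a : α) (ha : a ∉ s)
    (P : Finpartition s) : (fpNew a ha P).parts = insert {a} P.parts := rfl

theorem fpIns_parts {α : Type*} [DecidableEq α] {s : Finset α} (a : α) (ha : a ∉ s)
    (P : Finpartition s) (B : Finset α) (hB : B ∈ P.parts) :
    (fpIns a ha P B hB).parts = insert (insert a B) (P.parts.erase B) := rfl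

theorem fpNew_card {α : Type*} [DecidableEq α] {s : Finset α} (a : α) (ha : a ∉ s)
    (P : Finpartition s) : (fpNew a ha P).parts.card = P.parts.card + 1 :=
  Finpartition.card_extend _ _ _

theorem fpIns_card {α : Type*} [DecidableEq α] {s : Finset α} (a : α) (ha : a ∉ s)
    (P : Finpartition s) (B : Finset α) (hB : B ∈ P.parts) :
    (fpIns a ha P B hB).parts.card = P.parts.card := by
  refine (Finpartition.card_extend _ _ _).trans ?_
  exact Finset.card_erase_add_one hB

def fpMap {α : Type*} [DecidableEq α] {s : Finset α} (a : α) (ha : a ∉ s) (k : ℕ) :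
    ({P : Finpartition s // P.parts.card = k} ⊕
      (Σ P : {P : Finpartition s // P.parts.card = k + 1}, {B // B ∈ P.1.parts})) →
    {P : Finpartition (insert a s) // P.parts.card = k + 1}
  | Sum.inl P => ⟨fpNew a ha P.1, by rw [fpNew_card, P.2]⟩
  | Sum.inr x => ⟨fpIns a ha x.1.1 x.2.1 x.2.2, by rw [fpIns_card, x.1.2]⟩

theorem fp_notMem {α : Type*} [DecidableEq α] {s : Finset α} {a : α} (ha : a ∉ s)
    (P : Finpartition s) {C : Finset α} (haC : a ∈ C) : C ∉ P.parts :=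
  fun h => ha (P.subset h haC)

theorem fp_ne {α : Type*} [DecidableEq α] {s : Finset α} {a : α} (ha : a ∉ s)
    (P Q : Finpartition s) {C : Finset α} (hC : C ∈ Q.parts) :
    fpNew a ha P ≠ fpIns a ha Q C hC := by
  intro h
  have h1 : ({a} : Finset α) ∈ (fpIns a ha Q C hC).parts := by
    rw [← h, fpNew_parts]; simp
  rw [fpIns_parts, Finset.mem_insert] at h1
  rcases h1 with h1 | h1
  · obtain ⟨x, hx⟩ := Q.nonempty_of_mem_parts hC
    have : x ∈ ({a} : Finset α) := by rw [h1]; simp [hx]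
    rw [Finset.mem_singleton] at this
    exact ha (this ▸ Q.subset hC hx)
  · exact fp_notMem ha Q (by simp) (Finset.mem_of_mem_erase h1)

theorem fpNew_inj {α : Type*} [DecidableEq α] {s : Finset α} {a : α} (ha : a ∉ s)
    (P Q : Finpartition s) (h : fpNew a ha P = fpNew a ha Q) : P = Q := by
  have h1 := congrArg (fun R => R.parts.erase {a}) h
  simp only [fpNew_parts] at h1
  rw [Finset.erase_insert (fp_notMem ha P (by simp)),
    Finset.erase_insert (fp_notMem ha Q (by simp))] at h1
  exact Finpartition.ext h1

theorem fpIns_inj {α : Type*} [DecidableEq α] {s : Finset α} {a : α} (ha : a ∉ s)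
    (P Q : Finpartition s) {B C : Finset α} (hB : B ∈ P.parts) (hC : C ∈ Q.parts)
    (h : fpIns a ha P B hB = fpIns a ha Q C hC) : P = Q ∧ B = C := by
  have hBC : insert a B = insert a C := by
    have h1 : insert a B ∈ (fpIns a ha Q C hC).parts := by
      rw [← h, fpIns_parts]; simp
    rw [fpIns_parts, Finset.mem_insert] at h1
    exact h1.resolve_right fun h1 =>
      fp_notMem ha Q (Finset.mem_insert_self a B) (Finset.mem_of_mem_erase h1)
  have haB : a ∉ B := fun h => ha (P.subset hB h)
  have haC : a ∉ C := fun h => ha (Q.subset hC h)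
  have hBC' : B = C := by
    rw [← Finset.erase_insert haB, hBC, Finset.erase_insert haC]
  subst hBC'
  refine ⟨?_, rfl⟩
  have h1 := congrArg (fun R => insert B (R.parts.erase (insert a B))) h
  simp only [fpIns_parts] at h1
  rw [Finset.erase_insert (fun h => fp_notMem ha P (by simp) (Finset.mem_of_mem_erase h)),
    Finset.erase_insert (fun h => fp_notMem ha Q (by simp) (Finset.mem_of_mem_erase h)),
    Finset.insert_erase hB, Finset.insert_erase hC] at h1
  exact Finpartition.ext h1

theorem fp_surj {α : Type*} [DecidableEq α] {s : Finset α} {a : α} (ha : a ∉ s)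
    (Q : Finpartition (insert a s)) :
    (∃ P, fpNew a ha P = Q) ∨ ∃ P B, ∃ hB : B ∈ P.parts, fpIns a ha P B hB = Q := by
  obtain ⟨B, hB, haB⟩ := Q.exists_mem (Finset.mem_insert_self a s)
  have hBs := Q.subset hB
  by_cases hBa : B = {a}
  · left
    subst hBa
    refine ⟨Q.ofSubset (Finset.erase_subset {a} Q.parts)
      ((fp_sup_erase Q _ hB).trans ?_), ?_⟩
    · ext x
      simp only [Finset.mem_sdiff, Finset.mem_insert, Finset.mem_singleton]
      constructor
      · tauto
      · intro hx; exact ⟨Or.inr hx, fun h => ha (h ▸ hx)⟩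
    · apply Finpartition.ext
      rw [fpNew_parts]
      exact Finset.insert_erase hB
  · right
    have hne : B.erase a ≠ ∅ := by
      intro h
      rw [Finset.erase_eq_empty_iff] at h
      rcases h with h | h
      · simp [h] at haB
      · exact hBa h
    let R := (Q.ofSubset (Finset.erase_subset B Q.parts) (fp_sup_erase Q _ hB)).extend
      (b := B.erase a) (c := s) hne
      (by
        rw [Finset.disjoint_left]
        intro x hx hx'
        exact (Finset.mem_sdiff.1 hx).2 (Finset.mem_of_mem_erase hx'))
      (by
        ext x
        have := @hBs x
        simp only [Finset.sup_eq_union, Finset.mem_union, Finset.mem_sdiff, Finset.mem_insert,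
          Finset.mem_erase] at this ⊢
        by_cases hxa : x = a
        · subst hxa; tauto
        · tauto)
    have hR : R.parts = insert (B.erase a) (Q.parts.erase B) := rfl
    refine ⟨R, B.erase a, by rw [hR]; simp, ?_⟩
    apply Finpartition.ext
    rw [fpIns_parts, hR, Finset.insert_erase haB, Finset.erase_insert, Finset.insert_erase hB]
    intro h
    obtain ⟨x, hx⟩ := Finset.nonempty_iff_ne_empty.2 hne
    exact (Finset.mem_erase.1 h).1 (Q.eq_of_mem_parts (Finset.mem_of_mem_erase h) hB hx
      (Finset.mem_of_mem_erase hx))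

theorem fpMap_bij {α : Type*} [DecidableEq α] {s : Finset α} (a : α) (ha : a ∉ s) (k : ℕ) :
    Function.Bijective (fpMap a ha k) := by
  constructor
  · rintro (⟨P, hP⟩ | ⟨⟨P, hP⟩, B, hB⟩) (⟨Q, hQ⟩ | ⟨⟨Q, hQ⟩, C, hC⟩) h
    · have := fpNew_inj ha P Q (congrArg Subtype.val h)
      subst this; rfl
    · exact (fp_ne ha P Q hC (congrArg Subtype.val h)).elim
    · exact (fp_ne ha Q P hB (congrArg Subtype.val h).symm).elim
    · obtain ⟨h1, h2⟩ := fpIns_inj ha P Q hB hC (congrArg Subtype.val h)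
      subst h1; subst h2; rfl
  · rintro ⟨Q, hQ⟩
    rcases fp_surj ha Q with ⟨P, rfl⟩ | ⟨P, B, hB, rfl⟩
    · rw [fpNew_card] at hQ
      exact ⟨Sum.inl ⟨P, by omega⟩, rfl⟩
    · rw [fpIns_card] at hQ
      exact ⟨Sum.inr ⟨⟨P, hQ⟩, B, hB⟩, rfl⟩

theorem fp_card {α : Type*} [DecidableEq α] (s : Finset α) : ∀ k : ℕ,
    Nat.card {P : Finpartition s // P.parts.card = k} = Nat.stirlingSecond s.card k := by
  induction s using Finset.induction_on with
  | empty =>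
    have h0 : ∀ P : Finpartition (∅ : Finset α), P.parts = ∅ :=
      fun P => P.parts_eq_empty_iff.2 rfl
    intro k
    cases k with
    | zero =>
      rw [Finset.card_empty, Nat.stirlingSecond_zero, Nat.card_eq_one_iff_unique]
      exact ⟨⟨fun P Q => Subtype.ext (Finpartition.ext (by rw [h0, h0]))⟩,
        ⟨⟨Finpartition.empty _, rfl⟩⟩⟩
    | succ k =>
      rw [Finset.card_empty, Nat.stirlingSecond_zero_succ]
      have : IsEmpty {P : Finpartition (∅ : Finset α) // P.parts.card = k + 1} :=
        ⟨fun P => by have := P.2; rw [h0] at this; simp at this⟩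
      exact Nat.card_of_isEmpty
  | insert a s ha ih =>
    intro k
    rw [Finset.card_insert_of_notMem ha]
    cases k with
    | zero =>
      rw [Nat.stirlingSecond_succ_zero]
      have : IsEmpty {P : Finpartition (insert a s) // P.parts.card = 0} :=
        ⟨fun P => by
          have := P.2
          rw [Finset.card_eq_zero, Finpartition.parts_eq_empty_iff] at this
          simp at this⟩
      exact Nat.card_of_isEmpty
    | succ k =>
      rw [Nat.stirlingSecond_succ_succ, ← Nat.card_congr (Equiv.ofBijective _ (fpMap_bij a ha k)),
        Nat.card_sum, ih, Nat.card_sigma]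
      have : ∀ P : {P : Finpartition s // P.parts.card = k + 1},
          Nat.card {B // B ∈ P.1.parts} = k + 1 := by
        intro P
        rw [Nat.card_eq_fintype_card, Fintype.card_coe, P.2]
      simp only [this, Finset.sum_const, Finset.card_univ, smul_eq_mul]
      rw [← Nat.card_eq_fintype_card, ih]
      ring

theorem stirlingSecond_eq_nat (p q : ℕ) : stirlingSecond p q = Nat.stirlingSecond p q := by
  rw [stirlingSecond, fp_card]; simp

open Polynomial in
theorem exists_sum_poly (N : ℕ) (P : ℚ[X]) (hP : P.natDegree ≤ N) :
    ∃ Q : ℚ[X], Q.natDegree ≤ N + 1 ∧ Q.coeff (N + 1) = P.coeff N / (N + 1) ∧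
      ∀ n : ℕ, Q.eval (n : ℚ) = ∑ k ∈ Finset.range n, P.eval (k : ℚ) := by
  refine ⟨∑ i ∈ Finset.range (N + 1), C (P.coeff i / (i + 1)) *
    (Polynomial.bernoulli (i + 1) - C (_root_.bernoulli (i + 1))), ?_, ?_, ?_⟩
  · rw [natDegree_le_iff_coeff_eq_zero]
    intro m hm
    rw [finsetSum_coeff]
    apply Finset.sum_eq_zero
    intro i hi
    rw [Finset.mem_range] at hi
    rw [coeff_C_mul, coeff_sub, coeff_bernoulli, coeff_C, if_neg (by omega), if_neg (by omega)]
    simp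
  · rw [finsetSum_coeff, Finset.sum_range_succ, Finset.sum_eq_zero]
    · simp [coeff_C, coeff_bernoulli]
    · intro i hi
      rw [Finset.mem_range] at hi
      rw [coeff_C_mul, coeff_sub, coeff_bernoulli, coeff_C, if_neg (by omega), if_neg (by omega)]
      simp
  · intro n
    simp_rw [eval_eq_sum_range' (Nat.lt_succ_of_le hP)]
    rw [Finset.sum_comm, eval_finsetSum]
    apply Finset.sum_congr rfl
    intro i _
    rw [eval_mul, eval_C, eval_sub, eval_C, ← Finset.mul_sum,
      ← Polynomial.sum_range_pow_eq_bernoulli_sub]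
    have : (i : ℚ) + 1 ≠ 0 := by positivity
    field_simp

open Polynomial in
theorem stirling_poly_aux (d : ℕ) :
    ∃ q : ℚ[X], q.natDegree = 2 * d ∧
      q.leadingCoeff = 1 / (2 ^ d * Nat.factorial d) ∧
      ∀ ν : ℕ, q.eval (ν : ℚ) = Nat.stirlingSecond (ν + d) ν := by
  induction d with
  | zero => exact ⟨1, by simp, by simp, by simp [Nat.stirlingSecond_self]⟩
  | succ d ih =>
    obtain ⟨q, h1, h2, h3⟩ := ih
    have hq : q.leadingCoeff ≠ 0 := by rw [h2]; positivity
    have hq0 : q ≠ 0 := leadingCoeff_ne_zero.1 hq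
    have hX : (X + 1 : ℚ[X]).natDegree = 1 := natDegree_X_add_C 1
    have hXl : (X + 1 : ℚ[X]).leadingCoeff = 1 := leadingCoeff_X_add_C 1
    have hcl : (q.comp (X + 1)).leadingCoeff = q.leadingCoeff := by
      rw [leadingCoeff_comp (by rw [hX]; simp), hXl]; simp
    have hPl : ((X + 1) * q.comp (X + 1)).leadingCoeff = q.leadingCoeff := by
      rw [leadingCoeff_mul, hcl, hXl, one_mul]
    have hPd : ((X + 1) * q.comp (X + 1)).natDegree = 2 * d + 1 := by
      rw [natDegree_mul' (by rw [hcl, hXl]; simpa using hq0), natDegree_comp, hX, h1]; ring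
    obtain ⟨Q, g1, g2, g3⟩ := exists_sum_poly (2 * d + 1) _ hPd.le
    have hc : Q.coeff (2 * d + 1 + 1) = 1 / (2 ^ (d + 1) * Nat.factorial (d + 1)) := by
      rw [g2, ← hPd, coeff_natDegree, hPl, hPd, h2, Nat.factorial_succ]
      push_cast
      field_simp
      ring
    have hd : Q.natDegree = 2 * d + 1 + 1 :=
      natDegree_eq_of_le_of_coeff_ne_zero g1 (by rw [hc]; positivity)
    refine ⟨Q, by rw [hd]; ring, by rw [leadingCoeff, hd, hc], ?_⟩
    intro ν
    rw [g3]
    induction ν with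
    | zero => simp
    | succ ν ih =>
      rw [Finset.sum_range_succ, ih, show ν + 1 + (d + 1) = (ν + (d + 1)) + 1 by ring,
        Nat.stirlingSecond_succ_succ]
      have := h3 (ν + 1)
      rw [show ν + 1 + d = ν + (d + 1) by ring] at this
      push_cast at this ⊢
      rw [eval_mul, eval_comp]
      simp only [eval_add, eval_X, eval_one]
      rw [this]
      ring

/-- For every `d ≥ 0` there is a polynomial of degree exactly `2d` with rational
coefficients, with leading coefficient `1/(2^d · d!) = 1/(2d)!!`, whose value at every
positive integer `ν` is the Stirling number `S(ν+d, ν)`. -/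
theorem exists_stirling_polynomial (d : ℕ) :
    ∃ q : Polynomial ℚ, q.degree = (2 * d : ℕ) ∧
      q.leadingCoeff = 1 / (2 ^ d * Nat.factorial d) ∧
      ∀ ν : ℕ, 1 ≤ ν → q.eval (ν : ℚ) = stirlingSecond (ν + d) ν := by
  obtain ⟨q, h1, h2, h3⟩ := stirling_poly_aux d
  have hq : q ≠ 0 := by
    rw [← Polynomial.leadingCoeff_ne_zero, h2]; positivity
  refine ⟨q, by rw [Polynomial.degree_eq_natDegree hq, h1], h2, fun ν _ => ?_⟩
  rw [h3, stirlingSecond_eq_nat]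
end

section
/- For every positive integer μ: Σ_{ν=1}^{μ} ν · μ^{μ−ν} · μ!/(μ−ν)! = μ^{μ+1}. -/
theorem rooted_forest_aux (m : ℕ) : ∀ k, k ≤ m →
    ∑ ν ∈ Finset.Icc 1 k, ν * m ^ (m - ν) * (Nat.factorial m / Nat.factorial (m - ν))
      + m ^ (m - k) * m.descFactorial (k + 1) = m ^ (m + 1) := by
  intro k
  induction k with
  | zero => intro _; simp [pow_succ]
  | succ k ih =>
    intro hk
    have h := ih (by omega)
    rw [Finset.sum_Icc_succ_top (by omega), ← Nat.descFactorial_eq_div hk,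
      Nat.descFactorial_succ m (k + 1), ← h, add_assoc]
    congr 1
    obtain ⟨j, rfl⟩ := Nat.exists_eq_add_of_le hk
    have e1 : k + 1 + j - (k + 1) = j := by omega
    have e2 : k + 1 + j - k = j + 1 := by omega
    rw [e1, e2]
    generalize (k + 1 + j).descFactorial (k + 1) = D
    rw [pow_succ]
    generalize (k + 1 + j) ^ j = P
    ring

/-- For every positive integer `μ`:
`Σ_{ν=1}^{μ} ν · μ^(μ-ν) · μ!/(μ-ν)! = μ^(μ+1)`. -/
theorem rooted_forest_identity (μ : ℕ) (hμ : 1 ≤ μ) :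
    ∑ ν ∈ Finset.Icc 1 μ,
        ν * μ ^ (μ - ν) * (Nat.factorial μ / Nat.factorial (μ - ν)) = μ ^ (μ + 1) := by
  have h := rooted_forest_aux μ μ le_rfl
  rw [Nat.descFactorial_of_lt (Nat.lt_succ_self μ), mul_zero, add_zero] at h
  exact h
end

section
/- For every positive integer m and all nonnegative integers k_1,…,k_m, there exists a polynomial Q with rational coefficients of degree |k|+m−1 (where |k| = k_1+⋯+k_m) with leading coefficient k_1!·k_2!⋯k_m!/(|k|+m−1)!, such that for every integer n ≥ m: Σ α_1^{k_1}·α_2^{k_2}⋯α_m^{k_m} = Q(n), where the sum runs over all tuples of positive integers (α_1,…,α_m) with α_1+⋯+α_m = n. -/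
open Polynomial in
lemma aux_faul (q : ℕ) : ∃ R : ℚ[X], R.natDegree ≤ q + 1 ∧ R.coeff (q+1) = 1 / (q+1) ∧
    ∀ n : ℕ, 1 ≤ n → ∑ a ∈ Finset.Ico 1 n, (a:ℚ)^q = R.eval (n:ℚ) := by
  refine ⟨C (1/((q:ℚ)+1)) * (Polynomial.bernoulli (q+1) - C (_root_.bernoulli (q+1))) - C (0^q), ?_, ?_, ?_⟩
  · refine (natDegree_sub_le _ _).trans (max_le ?_ (by simp))
    refine (natDegree_C_mul_le _ _).trans ?_
    refine (natDegree_sub_le _ _).trans (max_le ?_ (by simp))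
    rw [Polynomial.bernoulli_def]
    refine natDegree_sum_le_of_forall_le _ _ fun i hi => ?_
    refine (natDegree_monomial_le _).trans ?_
    simp at hi; omega
  · have : (Polynomial.bernoulli (q+1)).coeff (q+1) = 1 := by
      rw [Polynomial.bernoulli_def, finsetSum_coeff]
      rw [Finset.sum_eq_single (q+1)]
      · simp
      · intro b hb hb'
        rw [coeff_monomial, if_neg hb']
      · simp
    simp only [coeff_sub, coeff_C_mul, this, coeff_C_succ]
    simp
  · intro n hn
    have h := Polynomial.sum_range_pow_eq_bernoulli_sub n q
    have h2 := Finset.sum_range_eq_add_Ico (fun a : ℕ => (a:ℚ)^q) (n := n) (by omega)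
    have hq : (q:ℚ)+1 ≠ 0 := by positivity
    simp only [eval_sub, eval_mul, eval_C]
    rw [← Nat.succ_eq_add_one, ← h, h2]
    push_cast
    field_simp
    ring

open Polynomial in
lemma aux_conv (p : ℕ) : ∀ q : ℕ, ∃ R : ℚ[X], R.natDegree ≤ p + q + 1 ∧
    R.coeff (p+q+1) = (p.factorial * q.factorial : ℚ) / (p+q+1).factorial ∧
    ∀ n : ℕ, 1 ≤ n → ∑ a ∈ Finset.Ico 1 n, (a:ℚ)^p * ((n - a : ℕ):ℚ)^q = R.eval (n:ℚ) := by
  induction p with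
  | zero =>
    intro q
    obtain ⟨R, h1, h2, h3⟩ := aux_faul q
    refine ⟨R, by simpa using h1, ?_, ?_⟩
    · rw [zero_add, h2, Nat.factorial_succ]
      have := Nat.factorial_ne_zero q
      push_cast
      field_simp
      simp
    · intro n hn
      rw [← h3 n hn]
      simp only [pow_zero, one_mul]
      refine Finset.sum_nbij' (fun a => n - a) (fun a => n - a) ?_ ?_ ?_ ?_ ?_ <;>
        intro a ha <;> simp at ha ⊢ <;> omega
  | succ p ih =>
    intro q
    obtain ⟨R, h1, h2, h3⟩ := ih q
    obtain ⟨T, g1, g2, g3⟩ := ih (q+1)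
    refine ⟨X * R - T, ?_, ?_, ?_⟩
    · refine (natDegree_sub_le _ _).trans (max_le ?_ (by omega))
      refine natDegree_mul_le.trans ?_
      have := natDegree_X_le (R := ℚ)
      omega
    · rw [show p + 1 + q + 1 = (p+q+1)+1 by ring, coeff_sub, coeff_X_mul, h2,
        show p+q+1+1 = p + (q+1)+1 by ring, g2, show p+(q+1)+1 = (p+q+1)+1 by ring,
        Nat.factorial_succ (p+q+1), Nat.factorial_succ q, Nat.factorial_succ p]
      have := Nat.factorial_ne_zero (p+q+1)
      push_cast
      have h : (p:ℚ)+q+1+1 ≠ 0 := by positivity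
      field_simp
      ring
    · intro n hn
      rw [eval_sub, eval_mul, eval_X, ← h3 n hn, ← g3 n hn, Finset.mul_sum, ← Finset.sum_sub_distrib]
      refine Finset.sum_congr rfl fun a ha => ?_
      simp at ha
      rw [Nat.cast_sub ha.2.le]
      ring

open Polynomial in
lemma aux_step (p d : ℕ) (P : ℚ[X]) (hP : P.natDegree ≤ d) : ∃ R : ℚ[X], R.natDegree ≤ p + d + 1 ∧
    R.coeff (p+d+1) = P.coeff d * ((p.factorial * d.factorial : ℚ) / (p+d+1).factorial) ∧
    ∀ n : ℕ, 1 ≤ n → ∑ a ∈ Finset.Ico 1 n, (a:ℚ)^p * P.eval ((n - a : ℕ):ℚ) = R.eval (n:ℚ) := by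
  choose R h1 h2 h3 using aux_conv p
  refine ⟨∑ j ∈ Finset.range (d+1), C (P.coeff j) * R j, ?_, ?_, ?_⟩
  · refine natDegree_sum_le_of_forall_le _ _ fun i hi => ?_
    refine (natDegree_C_mul_le _ _).trans ((h1 i).trans ?_)
    simp at hi; omega
  · rw [finsetSum_coeff, Finset.sum_eq_single d]
    · rw [coeff_C_mul, h2]
    · intro j hj hj'
      simp at hj
      rw [coeff_C_mul, coeff_eq_zero_of_natDegree_lt (p := R j), mul_zero]
      have := h1 j
      omega
    · simp
  · intro n hn
    simp only [eval_finsetSum, eval_mul, eval_C, ← h3 _ n hn, Finset.mul_sum]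
    rw [Finset.sum_comm]
    refine Finset.sum_congr rfl fun a ha => ?_
    rw [eval_eq_sum_range' (n := d+1) (by omega), Finset.mul_sum]
    refine Finset.sum_congr rfl fun j hj => ?_
    ring

lemma aux_rec (m : ℕ) (k : Fin (m+2) → ℕ) (n : ℕ) :
    ∑ α ∈ Finset.filter (fun α : Fin (m+2) → ℕ => ∑ i, α i = n)
            (Fintype.piFinset fun _ : Fin (m+2) => Finset.Icc 1 n),
          ∏ i, (α i : ℚ) ^ (k i) =
    ∑ a ∈ Finset.Ico 1 n, (a:ℚ)^(k 0) *
      ∑ α ∈ Finset.filter (fun α : Fin (m+1) → ℕ => ∑ i, α i = n - a)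
            (Fintype.piFinset fun _ : Fin (m+1) => Finset.Icc 1 (n-a)),
          ∏ i, (α i : ℚ) ^ (k i.succ) := by
  simp only [Finset.mul_sum]
  rw [Finset.sum_sigma']
  refine Finset.sum_bij' (fun α _ => ⟨α 0, fun i => α i.succ⟩) (fun x _ => Fin.cons x.1 x.2) ?_ ?_ ?_ ?_ ?_
  · intro α hα
    simp only [Finset.mem_filter, Fintype.mem_piFinset, Finset.mem_Icc, Finset.mem_sigma, Finset.mem_Ico] at hα ⊢
    obtain ⟨h1, h2⟩ := hα
    rw [Fin.sum_univ_succ] at h2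
    have h3 : ∀ i : Fin (m+1), α i.succ ≤ ∑ i : Fin (m+1), α i.succ := fun i =>
      Finset.single_le_sum (f := fun i : Fin (m+1) => α i.succ) (fun _ _ => Nat.zero_le _) (Finset.mem_univ i)
    have h4 := h1 0
    have h5 := h1 (Fin.succ 0)
    have h6 := h3 0
    refine ⟨by omega, fun i => ⟨(h1 _).1, ?_⟩, by omega⟩
    have := h3 i
    omega
  · rintro ⟨a, β⟩ h
    simp only [Finset.mem_filter, Fintype.mem_piFinset, Finset.mem_Icc, Finset.mem_sigma, Finset.mem_Ico] at h ⊢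
    obtain ⟨h0, h1, h2⟩ := h
    refine ⟨fun i => ?_, ?_⟩
    · refine Fin.cases ?_ (fun i => ?_) i
      · simp; omega
      · have := h1 i
        simp; omega
    · rw [Fin.sum_univ_succ]
      simp [h2]; omega
  · intro α _
    funext i
    refine Fin.cases ?_ (fun i => ?_) i <;> simp
  · rintro ⟨a, β⟩ _
    simp
  · intro α _
    rw [Fin.prod_univ_succ]

open Polynomial in
lemma aux_main (m : ℕ) : ∀ k : Fin (m+1) → ℕ, ∃ Q : ℚ[X], Q.natDegree ≤ (∑ i, k i) + m ∧
    Q.coeff ((∑ i, k i) + m) = (∏ i, (Nat.factorial (k i) : ℚ)) / Nat.factorial ((∑ i, k i) + m) ∧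
    ∀ n : ℕ, 1 ≤ n → 
        ∑ α ∈ Finset.filter (fun α : Fin (m+1) → ℕ => ∑ i, α i = n)
            (Fintype.piFinset fun _ : Fin (m+1) => Finset.Icc 1 n),
          ∏ i, (α i : ℚ) ^ (k i) = Q.eval (n : ℚ) := by
  induction m with
  | zero =>
    intro k
    refine ⟨X ^ k 0, by simp, ?_, ?_⟩
    · have := Nat.factorial_ne_zero (k 0)
      simp [this]
    · intro n hn
      rw [Finset.sum_eq_single (fun _ => n)]
      · simp
      · intro b hb hb'
        simp at hb
        exact absurd (_root_.funext fun i : Fin 1 => by rw [Subsingleton.elim i 0]; exact hb.2) hb'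
      · intro h
        simp at h
        omega
  | succ m ih =>
    intro k
    obtain ⟨P, h1, h2, h3⟩ := ih (fun i => k i.succ)
    obtain ⟨R, g1, g2, g3⟩ := aux_step (k 0) _ P h1
    have e : ∑ i, k i + (m+1) = k 0 + (∑ i : Fin (m+1), k i.succ + m) + 1 := by
      rw [Fin.sum_univ_succ]; ring
    refine ⟨R, ?_, ?_, ?_⟩
    · rw [e]; exact g1
    · rw [e, g2, h2, Fin.prod_univ_succ (fun i => (Nat.factorial (k i) : ℚ))]
      have := Nat.factorial_ne_zero (∑ i : Fin (m+1), k i.succ + m)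
      field_simp
    · intro n hn
      rw [aux_rec, ← g3 n hn]
      refine Finset.sum_congr rfl fun a ha => ?_
      simp at ha
      rw [h3 (n-a) (by omega)]


/-- For every positive integer `m` and all nonnegative integers `k₁, …, k_m` there is
a polynomial `Q` with rational coefficients of degree `|k| + m - 1` and leading
coefficient `k₁!⋯k_m!/(|k|+m-1)!` such that, for every `n ≥ m`, the sum of
`α₁^{k₁}⋯α_m^{k_m}` over all compositions of `n` into `m` positive parts equals
`Q(n)`. -/
theorem exists_composition_power_sum_polynomial (m : ℕ) (hm : 1 ≤ m) (k : Fin m → ℕ) :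
    ∃ Q : Polynomial ℚ,
      Q.degree = ((∑ i, k i) + m - 1 : ℕ) ∧
      Q.leadingCoeff = (∏ i, (Nat.factorial (k i) : ℚ)) /
        Nat.factorial ((∑ i, k i) + m - 1) ∧
      ∀ n : ℕ, m ≤ n →
        ∑ α ∈ Finset.filter (fun α : Fin m → ℕ => ∑ i, α i = n)
            (Fintype.piFinset fun _ : Fin m => Finset.Icc 1 n),
          ∏ i, (α i : ℚ) ^ (k i) = Q.eval (n : ℚ) := by
  obtain ⟨m, rfl⟩ : ∃ m', m = m' + 1 := ⟨m - 1, by omega⟩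
  obtain ⟨Q, h1, h2, h3⟩ := aux_main m k
  have e : ∑ i, k i + (m+1) - 1 = ∑ i, k i + m := by omega
  rw [e]
  have h0 : Q.coeff ((∑ i, k i) + m) ≠ 0 := by
    rw [h2]
    have : (∏ i, (Nat.factorial (k i) : ℚ)) ≠ 0 :=
      Finset.prod_ne_zero_iff.2 fun i _ => by exact_mod_cast Nat.factorial_ne_zero _
    have := Nat.factorial_ne_zero (∑ i, k i + m)
    positivity
  have hd : Q.natDegree = ∑ i, k i + m := Polynomial.natDegree_eq_of_le_of_coeff_ne_zero h1 h0
  refine ⟨Q, ?_, ?_, fun n hn => h3 n (by omega)⟩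
  · rw [Polynomial.degree_eq_natDegree, hd]
    rintro rfl
    simp at h0
  · rw [Polynomial.leadingCoeff, hd, h2]
end

section
/- Define, for nonnegative integers i and j, the functions P_i(x,y) = Σ_{α+β=x+y+1, α,β≥1} α·β·q_i(α) and P_{i,j}(x) = Σ_{α+β+γ=x+1, α,β,γ≥1} α·β·γ·q_i(α)·q_j(β), where q_d(ν) = S(ν+d,ν). Then: (1) P_i agrees, for all positive integer arguments, with a polynomial in (x,y) of total degree 2i+3, and for all integers a ≥ 0, b ≥ 0 with a+b ≥ 1 the coefficient of x^{2a+1}y^{2b} in P_{a+b−1} equals (2a+2b−1)!!/((2a+1)!·(2b)!); (2) P_{i,j} agrees, for all positive integer arguments, with a polynomial in x of degree 2i+2j+5, and for all integers a, b ≥ 0 the coefficient of x^{2a+2b+5} in P_{a,b} equals (2a+1)!!·(2b+1)!!/(2a+2b+5)!. -/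
/-- `q_d(ν) = S(ν+d, ν)`. -/
noncomputable def qd (d ν : ℕ) : ℕ := stirlingSecond (ν + d) ν

/-- `P_i(x, y) = Σ_{α+β = x+y+1, α,β ≥ 1} α·β·q_i(α)`. -/
noncomputable def POne (i x y : ℕ) : ℚ :=
  ∑ α ∈ Finset.Icc 1 (x + y), (α : ℚ) * ((x + y + 1 - α : ℕ) : ℚ) * (qd i α : ℚ)

/-- `P_{i,j}(x) = Σ_{α+β+γ = x+1, α,β,γ ≥ 1} α·β·γ·q_i(α)·q_j(β)`. -/
noncomputable def PTwo (i j x : ℕ) : ℚ :=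
  ∑ α ∈ Finset.Icc 1 x, ∑ β ∈ Finset.Icc 1 (x - α),
    (α : ℚ) * (β : ℚ) * ((x + 1 - α - β : ℕ) : ℚ) * (qd i α : ℚ) * (qd j β : ℚ)


open Classical in
theorem aux_card_parts (n : ℕ) (s : Setoid (Fin n)) :
    (Finpartition.ofSetoid s).parts.card = Nat.card (Quotient s) := by
  rw [Finpartition.ofSetoid, Finpartition.ofSetSetoid_parts]
  have hfib : ∀ a b : Fin n, Quotient.mk s a = Quotient.mk s b ↔
      (Finset.univ.filter fun c => s.r a c) = (Finset.univ.filter fun c => s.r b c) := by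
    intro a b
    rw [Quotient.eq]
    constructor
    · intro h
      ext c
      simp only [Finset.mem_filter, Finset.mem_univ, true_and]
      exact ⟨fun h' => s.trans' (s.symm' h) h', fun h' => s.trans' h h'⟩
    · intro h
      have : b ∈ (Finset.univ.filter fun c => s.r a c) := by
        rw [h]; simpa using s.refl' b
      simpa using this
  let g : Quotient s → Finset (Fin n) :=
    Quotient.lift (fun a => Finset.univ.filter fun c => s.r a c)
      (fun a b h => (hfib a b).1 (Quotient.sound h))
  have hg : Function.Injective g := by
    intro p q
    induction p using Quotient.inductionOn with
    | h a => induction q using Quotient.inductionOn with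
      | h b => exact fun h => (hfib a b).2 h
  let : Fintype (Quotient s) := Fintype.ofFinite _
  rw [Nat.card_eq_fintype_card, ← Finset.card_univ, ← Finset.card_image_of_injective _ hg]
  congr 1
  ext t
  simp only [Finset.mem_image, Finset.mem_univ, true_and]
  constructor
  · rintro ⟨a, rfl⟩
    exact ⟨Quotient.mk s a, rfl⟩
  · rintro ⟨q, rfl⟩
    induction q using Quotient.inductionOn with
    | h a => exact ⟨a, rfl⟩

def auxF (n : ℕ) (x : Σ s : Setoid (Fin n), Option (Quotient s)) : Setoid (Fin (n + 1)) :=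
  Setoid.ker (Fin.cons (α := fun _ => Option (Quotient x.1)) x.2
    (fun a => some (Quotient.mk x.1 a)) : Fin (n + 1) → Option (Quotient x.1))

theorem auxF_ss (n : ℕ) (x : Σ s : Setoid (Fin n), Option (Quotient s)) (a b : Fin n) :
    auxF n x a.succ b.succ ↔ x.1 a b := by
  unfold auxF
  rw [Setoid.ker_def, Fin.cons_succ, Fin.cons_succ, Option.some_inj, Quotient.eq]

theorem auxF_zs (n : ℕ) (x : Σ s : Setoid (Fin n), Option (Quotient s)) (b : Fin n) :
    auxF n x 0 b.succ ↔ x.2 = some (Quotient.mk x.1 b) := by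
  unfold auxF
  rw [Setoid.ker_def, Fin.cons_zero, Fin.cons_succ]

theorem auxF_inj (n : ℕ) : Function.Injective (auxF n) := by
  rintro ⟨s, o⟩ ⟨t, p⟩ h
  have h1 : s = t := by
    ext a b
    rw [← auxF_ss n ⟨s, o⟩, ← auxF_ss n ⟨t, p⟩, h]
  subst h1
  have h2 : ∀ b, o = some (Quotient.mk s b) ↔ p = some (Quotient.mk s b) := by
    intro b
    rw [← auxF_zs n ⟨s, o⟩, ← auxF_zs n ⟨s, p⟩, h]
  congr 1
  ext q
  induction q using Quotient.inductionOn with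
  | h b => exact h2 b

theorem auxF_surj (n : ℕ) : Function.Surjective (auxF n) := by
  intro r
  have key : ∀ x : Σ s : Setoid (Fin n), Option (Quotient s), x.1 = Setoid.comap Fin.succ r →
      (∀ b, r 0 (Fin.succ b) ↔ x.2 = some (Quotient.mk x.1 b)) → auxF n x = r := by
    intro x h1 h2
    ext a b
    refine Fin.cases ?_ (fun a => ?_) a <;> refine Fin.cases ?_ (fun b => ?_) b
    · exact ⟨fun _ => r.refl' 0, fun _ => (auxF n x).refl' 0⟩
    · rw [auxF_zs, h2]
    · rw [Setoid.comm', auxF_zs, r.comm', h2]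
    · rw [auxF_ss, h1]; rfl
  by_cases h : ∃ b, r 0 (Fin.succ b)
  · obtain ⟨b, hb⟩ := h
    refine ⟨⟨Setoid.comap Fin.succ r, some (Quotient.mk _ b)⟩, key _ rfl fun c => ?_⟩
    simp only [Option.some.injEq, Quotient.eq]
    change _ ↔ r b.succ c.succ
    exact ⟨fun h => r.trans' (r.symm' hb) h, fun h => r.trans' hb h⟩
  · refine ⟨⟨Setoid.comap Fin.succ r, none⟩, key _ rfl fun c => ?_⟩
    simpa using fun hc => h ⟨c, hc⟩

theorem auxF_card_none (n : ℕ) (s : Setoid (Fin n)) :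
    Nat.card (Quotient (auxF n ⟨s, none⟩)) = Nat.card (Quotient s) + 1 := by
  rw [← Finite.card_option]
  refine Nat.card_congr (Setoid.quotientKerEquivOfSurjective _ ?_)
  rintro (_ | q)
  · exact ⟨0, rfl⟩
  · induction q using Quotient.inductionOn with
    | h b => exact ⟨b.succ, by simp⟩

theorem auxF_card_some (n : ℕ) (s : Setoid (Fin n)) (q : Quotient s) :
    Nat.card (Quotient (auxF n ⟨s, some q⟩)) = Nat.card (Quotient s) := by
  refine (Nat.card_congr (Setoid.quotientKerEquivRange _)).trans ?_
  have : Set.range (Fin.cons (α := fun _ => Option (Quotient s)) (some q)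
    (fun a => some (Quotient.mk s a)) : Fin (n + 1) → Option (Quotient s)) = Set.range some := by
    ext o
    constructor
    · rintro ⟨a, rfl⟩
      refine Fin.cases ?_ (fun a => ?_) a <;> simp
    · rintro ⟨p, rfl⟩
      induction p using Quotient.inductionOn with
      | h b => exact ⟨b.succ, by simp⟩
  simp only
  rw [this]
  exact (Nat.card_congr (Equiv.ofInjective _ (Option.some_injective _))).symm

noncomputable def auxT (n k : ℕ) : ℕ := Nat.card {s : Setoid (Fin n) // Nat.card (Quotient s) = k}

open Classical in
theorem auxT_succ (n k : ℕ) : auxT (n + 1) (k + 1) = (k + 1) * auxT n (k + 1) + auxT n k := by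
  have h1 : auxT (n + 1) (k + 1) =
      Nat.card {x : Σ s : Setoid (Fin n), Option (Quotient s) //
        Nat.card (Quotient (auxF n x)) = k + 1} :=
    (Nat.card_congr ((Equiv.ofBijective _ ⟨auxF_inj n, auxF_surj n⟩).subtypeEquiv
      (fun x => Iff.rfl))).symm
  have : Finite (Setoid (Fin n)) :=
    Finite.of_injective (fun s : Setoid (Fin n) => s.r) (fun s t h => by
      ext a b
      exact iff_of_eq (congrFun (congrFun h a) b))
  let : Fintype (Setoid (Fin n)) := Fintype.ofFinite _
  let : ∀ s : Setoid (Fin n), Fintype (Quotient s) := fun s => Fintype.ofFinite _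
  rw [h1]
  unfold auxT
  rw [Nat.card_eq_fintype_card, Nat.card_eq_fintype_card, Nat.card_eq_fintype_card]
  simp only [Fintype.card_subtype, Finset.card_filter]
  rw [Fintype.sum_sigma, Finset.mul_sum, ← Finset.sum_add_distrib]
  refine Finset.sum_congr rfl fun s _ => ?_
  rw [Fintype.sum_option]
  simp only [auxF_card_none, auxF_card_some, Finset.sum_const, Finset.card_univ,
    ← Nat.card_eq_fintype_card]
  by_cases h : Nat.card (Quotient s) = k + 1
  · simp [← Nat.card_eq_fintype_card, h]
  · simp [← Nat.card_eq_fintype_card, h]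

theorem auxT_zero_zero : auxT 0 0 = 1 := by
  unfold auxT
  rw [Nat.card_eq_one_iff_unique]
  refine ⟨⟨?_⟩, ⟨⊥, ?_⟩⟩
  · rintro ⟨s, _⟩ ⟨t, _⟩
    congr 1
    ext a
    exact a.elim0
  · simp

theorem auxT_zero_succ (k : ℕ) : auxT 0 (k + 1) = 0 := by
  unfold auxT
  rw [Nat.card_eq_zero]
  left
  refine ⟨?_⟩
  rintro ⟨s, h⟩
  simp at h

theorem auxT_succ_zero (n : ℕ) : auxT (n + 1) 0 = 0 := by
  unfold auxT
  rw [Nat.card_eq_zero]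
  left
  refine ⟨?_⟩
  rintro ⟨s, h⟩
  have : Nonempty (Quotient s) := ⟨Quotient.mk s 0⟩
  exact absurd h Nat.card_pos.ne'

theorem auxT_eq (n k : ℕ) : auxT n k = Nat.stirlingSecond n k := by
  induction n generalizing k with
  | zero => cases k with
    | zero => exact auxT_zero_zero
    | succ k => exact auxT_zero_succ k
  | succ n ih => cases k with
    | zero => exact auxT_succ_zero n
    | succ k => rw [auxT_succ, ih, ih]; rfl

open Classical in
theorem stirlingSecond_eq (n k : ℕ) : stirlingSecond n k = Nat.stirlingSecond n k := by
  rw [← auxT_eq]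
  unfold stirlingSecond auxT
  symm
  have hinj : Function.Injective
      (fun s : Setoid (Fin n) => (Finpartition.ofSetoid s)) := by
    intro s t h
    ext a b
    rw [← Finpartition.mem_part_ofSetoid_iff_rel (s := s),
      ← Finpartition.mem_part_ofSetoid_iff_rel (s := t)]
    simp only at h
    rw [h]
  have hsurj : Function.Surjective
      (fun s : Setoid (Fin n) => (Finpartition.ofSetoid s)) := by
    intro P
    refine ⟨Setoid.ker P.part, ?_⟩
    ext t
    simp only [Finpartition.ofSetoid, Finpartition.ofSetSetoid_parts, Finset.mem_image, Finset.mem_univ, true_and]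
    have hf : ∀ a, (Finset.univ.filter fun b => (Setoid.ker P.part).r a b) = P.part a := by
      intro a
      ext b
      rw [P.mem_part_iff_part_eq_part (Finset.mem_univ _) (Finset.mem_univ _)]
      simp only [Finset.mem_filter, Finset.mem_univ, true_and]
      exact eq_comm
    constructor
    · rintro ⟨a, rfl⟩
      have := P.part_mem.2 (Finset.mem_univ a)
      rw [← hf] at this
      convert this
    · intro ht
      obtain ⟨a, ha⟩ := P.nonempty_of_mem_parts ht
      refine ⟨a, ?_⟩
      rw [← P.part_eq_of_mem ht ha, ← hf]
  refine Nat.card_congr ((Equiv.ofBijective _ ⟨hinj, hsurj⟩).subtypeEquiv (fun s => ?_))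
  change _ ↔ (Finpartition.ofSetoid s).parts.card = k
  rw [aux_card_parts]

def IsP (f : ℕ → ℚ) (m : ℕ) (c : ℚ) : Prop :=
  ∃ p : Polynomial ℚ, p.natDegree ≤ m ∧ p.coeff m = c ∧ ∀ n : ℕ, p.eval (n : ℚ) = f n

theorem IsP.add {f g : ℕ → ℚ} {m : ℕ} {c d : ℚ} (hf : IsP f m c) (hg : IsP g m d) :
    IsP (fun n => f n + g n) m (c + d) := by
  obtain ⟨p, h1, h2, h3⟩ := hf
  obtain ⟨q, k1, k2, k3⟩ := hg
  exact ⟨p + q, Polynomial.natDegree_add_le_of_degree_le h1 k1, by simp [h2, k2],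
    by simp [h3, k3]⟩

theorem IsP.smul {f : ℕ → ℚ} {m : ℕ} {c : ℚ} (hf : IsP f m c) (r : ℚ) :
    IsP (fun n => r * f n) m (r * c) := by
  obtain ⟨p, h1, h2, h3⟩ := hf
  exact ⟨Polynomial.C r * p, (Polynomial.natDegree_C_mul_le _ _).trans h1, by simp [h2],
    by simp [h3]⟩

theorem IsP.weaken {f : ℕ → ℚ} {m k : ℕ} {c : ℚ} (hf : IsP f m c) (h : m < k) :
    IsP f k 0 := by
  obtain ⟨p, h1, h2, h3⟩ := hf
  exact ⟨p, h1.trans h.le, Polynomial.coeff_eq_zero_of_natDegree_lt (by omega), h3⟩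

theorem IsP.mulX {f : ℕ → ℚ} {m : ℕ} {c : ℚ} (hf : IsP f m c) :
    IsP (fun n => n * f n) (m + 1) c := by
  obtain ⟨p, h1, h2, h3⟩ := hf
  refine ⟨Polynomial.X * p, ?_, by simp [h2], by simp [h3]⟩
  refine Polynomial.natDegree_mul_le.trans ?_
  have := Polynomial.natDegree_X_le (R := ℚ)
  omega

theorem IsP.shift {f : ℕ → ℚ} {m : ℕ} {c : ℚ} (hf : IsP f m c) :
    IsP (fun n => f (n + 1)) m c := by
  obtain ⟨p, h1, h2, h3⟩ := hf
  refine ⟨Polynomial.taylor 1 p, by rwa [Polynomial.natDegree_taylor], ?_, fun n => ?_⟩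
  · rcases h1.lt_or_eq with h | h
    · rw [Polynomial.coeff_eq_zero_of_natDegree_lt (by rwa [Polynomial.natDegree_taylor]), ← h2,
        Polynomial.coeff_eq_zero_of_natDegree_lt h]
    · rw [← h, Polynomial.coeff_taylor_natDegree, ← h2, ← h]; rfl
  · rw [Polynomial.taylor_eval]; change _ = f (n + 1); rw [← h3]; push_cast; rfl

/-- Splitting off the leading term. -/
theorem IsP.split {f : ℕ → ℚ} {m : ℕ} {c : ℚ} (hf : IsP f (m + 1) c) :
    ∃ (g : ℕ → ℚ) (d : ℚ), IsP g m d ∧ ∀ n : ℕ, f n = c * (n : ℚ) ^ (m + 1) + g n := by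
  obtain ⟨p, h1, h2, h3⟩ := hf
  refine ⟨fun n => (p - Polynomial.C c * Polynomial.X ^ (m + 1)).eval (n : ℚ), _,
    ⟨p - Polynomial.C c * Polynomial.X ^ (m + 1), ?_, rfl, fun n => rfl⟩, fun n => ?_⟩
  · rw [Polynomial.natDegree_le_iff_coeff_eq_zero]
    intro N hN
    rw [Polynomial.coeff_sub, Polynomial.coeff_C_mul_X_pow]
    split_ifs with h
    · rw [h, h2, sub_self]
    · rw [Polynomial.coeff_eq_zero_of_natDegree_lt (by omega), sub_zero]
  · simp [h3]

theorem IsP.const (c : ℚ) : IsP (fun _ => c) 0 c :=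
  ⟨Polynomial.C c, by simp, by simp, by simp⟩

theorem IsP.pow (m : ℕ) : IsP (fun n => (n : ℚ) ^ m) m 1 :=
  ⟨Polynomial.X ^ m, by simp, by simp, by simp⟩

theorem IsP.zero {f : ℕ → ℚ} {c : ℚ} (hf : IsP f 0 c) (n : ℕ) : f n = c := by
  obtain ⟨p, h1, h2, h3⟩ := hf
  rw [← h3, Polynomial.eq_C_of_natDegree_le_zero h1, Polynomial.eval_C, h2]

theorem IsP.diff {f : ℕ → ℚ} {m : ℕ} {c : ℚ} (hf : IsP f (m + 1) c) :
    IsP (fun n => f (n + 1) - f n) m ((m + 1) * c) := by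
  obtain ⟨g, d, hg, h⟩ := hf.split
  have h1 := hg.shift.add (hg.smul (-1))
  have h2 : IsP (fun n => ((n : ℚ) + 1) ^ (m + 1) - (n : ℚ) ^ (m + 1)) m (m + 1) := by
    refine ⟨(Polynomial.X + 1) ^ (m + 1) - Polynomial.X ^ (m + 1), ?_, ?_, by simp⟩
    · rw [Polynomial.natDegree_le_iff_coeff_eq_zero]
      intro N hN
      rw [Polynomial.coeff_sub, Polynomial.coeff_X_add_one_pow, Polynomial.coeff_X_pow]
      split_ifs with h
      · simp [h]
      · rw [Nat.choose_eq_zero_of_lt (by omega)]; simp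
    · rw [Polynomial.coeff_sub, Polynomial.coeff_X_add_one_pow, Polynomial.coeff_X_pow]
      simp
  have h3 := (h2.smul c).add h1
  convert h3 using 1
  · ext n
    rw [h, h]; push_cast; ring
  · ring

theorem IsP.sum_pow (m : ℕ) :
    IsP (fun n => ∑ k ∈ Finset.range n, (k : ℚ) ^ m) (m + 1) (1 / (m + 1)) := by
  refine ⟨∑ i ∈ Finset.range (m + 1), Polynomial.C (bernoulli i * ((m + 1).choose i) / (m + 1)) *
    Polynomial.X ^ (m + 1 - i), ?_, ?_, fun n => ?_⟩
  · refine Polynomial.natDegree_sum_le_of_forall_le _ _ fun i _ => ?_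
    exact (Polynomial.natDegree_C_mul_X_pow_le _ _).trans (by omega)
  · rw [Polynomial.finsetSum_coeff, Finset.sum_eq_single 0]
    · simp
    · intro i hi h0
      rw [Polynomial.coeff_C_mul_X_pow, if_neg (by simp at hi; omega)]
    · simp
  · change _ = ∑ k ∈ Finset.range n, (k : ℚ) ^ m
    rw [sum_range_pow, Polynomial.eval_finsetSum]
    refine Finset.sum_congr rfl fun i _ => ?_
    simp
    ring

theorem IsP.sum {f : ℕ → ℚ} {m : ℕ} {c : ℚ} (hf : IsP f m c) :
    IsP (fun n => ∑ k ∈ Finset.range n, f k) (m + 1) (c / (m + 1)) := by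
  induction m generalizing f c with
  | zero =>
    have := (IsP.sum_pow 0).smul c
    convert this using 1
    · ext n; simp [hf.zero]; ring
    · simp
  | succ m ih =>
    obtain ⟨g, d, hg, h⟩ := hf.split
    have h1 := ((IsP.sum_pow (m + 1)).smul c).add ((ih hg).weaken (Nat.lt_succ_self _))
    convert h1 using 1
    · ext n
      rw [Finset.mul_sum, ← Finset.sum_add_distrib]
      exact Finset.sum_congr rfl fun k _ => h k
    · ring

theorem IsP.conv {f g : ℕ → ℚ} {m k : ℕ} {c d : ℚ} (hf : IsP f m c) (hg : IsP g k d) :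
    IsP (fun n => ∑ α ∈ Finset.range (n + 1), f α * g (n - α)) (m + k + 1)
      (c * d * m.factorial * k.factorial / (m + k + 1).factorial) := by
  induction k generalizing g d with
  | zero =>
    have := (hf.sum.shift).smul d
    convert this using 1
    · ext n
      rw [Finset.mul_sum]
      exact Finset.sum_congr rfl fun k _ => by rw [hg.zero, mul_comm]
    · have := Nat.factorial_ne_zero m
      rw [add_zero, Nat.factorial_succ]
      push_cast
      field_simp
      simp
  | succ k ih =>
    have h1 := (((hf.shift.smul (g 0)).weaken (k := m + k + 1) (by omega)).add (ih hg.diff)).sum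
    have h2 := ((IsP.const (f 0 * g 0)).weaken (k := m + k + 1 + 1) (by omega)).add h1
    convert h2 using 1
    · ext n
      induction n with
      | zero => simp
      | succ n ihn =>
        rw [Finset.sum_range_succ _ n, ← add_assoc, ← ihn, Finset.sum_range_succ _ (n + 1),
          Nat.sub_self]
        have : ∑ α ∈ Finset.range (n + 1), f α * g (n + 1 - α) =
            ∑ α ∈ Finset.range (n + 1), f α * g (n - α) +
            ∑ α ∈ Finset.range (n + 1), f α * (g (n - α + 1) - g (n - α)) := by
          rw [← Finset.sum_add_distrib]
          refine Finset.sum_congr rfl fun α hα => ?_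
          rw [Finset.mem_range] at hα
          rw [show n + 1 - α = n - α + 1 by omega]
          ring
        rw [this]
        ring
    · rfl
    · have := Nat.factorial_ne_zero (m + k + 1)
      rw [← add_assoc, Nat.factorial_succ (m + k + 1), Nat.factorial_succ k]
      push_cast
      have h5 : (m : ℚ) + k + 1 + 1 ≠ 0 := by positivity
      field_simp
      simp

theorem qd_succ_succ (h : ∀ n k, stirlingSecond n k = Nat.stirlingSecond n k) (d n : ℕ) :
    qd (d + 1) (n + 1) = (n + 1) * qd d (n + 1) + qd (d + 1) n := by
  unfold qd
  rw [h, h, h, show n + 1 + (d + 1) = (n + 1 + d) + 1 by ring, Nat.stirlingSecond_succ_succ,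
    show n + (d + 1) = n + 1 + d by ring]

theorem qd_isP (h : ∀ n k, stirlingSecond n k = Nat.stirlingSecond n k) (d : ℕ) :
    IsP (fun n => (qd d n : ℚ)) (2 * d) (1 / (2 ^ d * d.factorial)) := by
  induction d with
  | zero =>
    convert IsP.const 1 using 1
    · ext n
      simp [qd, h, Nat.stirlingSecond_self]
    · simp
  | succ d ih =>
    convert (ih.mulX.shift).sum using 1
    · ext n
      induction n with
      | zero => simp [qd, h]
      | succ n ihn =>
        rw [Finset.sum_range_succ, ← ihn, qd_succ_succ h]
        push_cast
        ring
    · ring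
    · rw [Nat.factorial_succ]
      have := Nat.factorial_ne_zero d
      push_cast
      field_simp
      ring

theorem f_isP (h : ∀ n k, stirlingSecond n k = Nat.stirlingSecond n k) (d : ℕ) :
    IsP (fun n => (n : ℚ) * (qd d n : ℚ)) (2 * d + 1)
      ((2 * d + 1).doubleFactorial / (2 * d + 1).factorial) := by
  convert (qd_isP h d).mulX using 1
  have h2 : (2 * d + 1).factorial = (2 * d + 1).doubleFactorial * (2 ^ d * d.factorial) := by
    rw [Nat.factorial_eq_mul_doubleFactorial, Nat.doubleFactorial_two_mul]
  have h1 : ((2 * d + 1).doubleFactorial : ℚ) ≠ 0 := by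
    exact_mod_cast (Nat.doubleFactorial_pos _).ne'
  have := Nat.factorial_ne_zero d
  rw [h2]
  push_cast
  field_simp

noncomputable def GG (i N : ℕ) : ℚ :=
  ∑ α ∈ Finset.range (N + 1), ((α : ℚ) * (qd i α : ℚ)) * ((N - α : ℕ) + 1 : ℚ)

theorem icc_range (N : ℕ) (f : ℕ → ℚ) (h0 : f 0 = 0) :
    ∑ α ∈ Finset.Icc 1 N, f α = ∑ α ∈ Finset.range (N + 1), f α := by
  rw [Finset.sum_range_succ', h0, add_zero, Finset.range_eq_Ico, Finset.sum_Ico_add' f 0 N 1]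
  rfl

theorem GG_isP (h : ∀ n k, stirlingSecond n k = Nat.stirlingSecond n k) (i : ℕ) :
    IsP (GG i) (2 * i + 3) ((2 * i + 1).doubleFactorial / (2 * i + 3).factorial) := by
  have h1 : IsP (fun n => (n : ℚ) + 1) 1 1 := by
    have := (IsP.pow 1).shift
    simpa using this
  convert (f_isP h i).conv h1 using 1
  · rfl
  have := Nat.factorial_ne_zero (2 * i + 1)
  rw [Nat.factorial_one, show 2 * i + 1 + 1 + 1 = 2 * i + 3 by ring]
  field_simp
  norm_num

theorem GG_eq (i N : ℕ) :
    ∑ α ∈ Finset.Icc 1 N, (α : ℚ) * ((N + 1 - α : ℕ) : ℚ) * (qd i α : ℚ) = GG i N := by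
  rw [icc_range _ _ (by simp)]
  refine Finset.sum_congr rfl fun α hα => ?_
  rw [Finset.mem_range] at hα
  rw [show N + 1 - α = N - α + 1 by omega]
  push_cast
  ring

theorem PTwo_eq (i j x : ℕ) : PTwo i j x =
    ∑ α ∈ Finset.range (x + 1), ((α : ℚ) * (qd i α : ℚ)) * GG j (x - α) := by
  rw [← icc_range _ _ (by simp)]
  unfold PTwo
  refine Finset.sum_congr rfl fun α hα => ?_
  rw [Finset.mem_Icc] at hα
  rw [← GG_eq, Finset.mul_sum]
  refine Finset.sum_congr rfl fun β hβ => ?_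
  rw [show x + 1 - α - β = x - α + 1 - β by omega]
  ring

theorem PTwo_isP (h : ∀ n k, stirlingSecond n k = Nat.stirlingSecond n k) (a b : ℕ) :
    IsP (PTwo a b) (2 * a + 2 * b + 5)
      ((Nat.doubleFactorial (2 * a + 1) * Nat.doubleFactorial (2 * b + 1) : ℚ) /
          Nat.factorial (2 * a + 2 * b + 5)) := by
  convert (f_isP h a).conv (GG_isP h b) using 1
  · ext x; exact PTwo_eq a b x
  · ring
  · have := Nat.factorial_ne_zero (2 * a + 1)
    have := Nat.factorial_ne_zero (2 * b + 3)
    rw [show 2 * a + 1 + (2 * b + 3) + 1 = 2 * a + 2 * b + 5 by ring]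
    field_simp

theorem mv_exists (p : Polynomial ℚ) (m : ℕ) (hp : p.natDegree ≤ m) :
    ∃ Q : MvPolynomial (Fin 2) ℚ, Q.totalDegree ≤ m ∧
      (∀ x y : ℚ, MvPolynomial.eval ![x, y] Q = p.eval (x + y)) ∧
      ∀ u v : ℕ, u + v = m →
        MvPolynomial.coeff (Finsupp.single 0 u + Finsupp.single 1 v) Q
          = p.coeff m * (m.choose u) := by
  refine ⟨∑ k ∈ Finset.range (m + 1), ∑ j ∈ Finset.range (k + 1),
    MvPolynomial.monomial (Finsupp.single 0 j + Finsupp.single 1 (k - j))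
      (p.coeff k * (k.choose j)), ?_, ?_, ?_⟩
  · refine MvPolynomial.totalDegree_finsetSum_le fun k hk => ?_
    refine MvPolynomial.totalDegree_finsetSum_le fun j hj => ?_
    refine (MvPolynomial.totalDegree_monomial_le _ _).trans ?_
    rw [Finset.mem_range] at hk hj
    rw [Finsupp.sum_fintype _ _ (by simp)]
    simp
    omega
  · intro x y
    rw [Polynomial.eval_eq_sum_range' (Nat.lt_succ_of_le hp), map_sum]
    refine Finset.sum_congr rfl fun k _ => ?_
    rw [map_sum, add_pow, Finset.mul_sum]
    refine Finset.sum_congr rfl fun j _ => ?_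
    rw [MvPolynomial.eval_monomial, Finsupp.prod_fintype _ _ (by simp)]
    simp
    ring
  · intro u v huv
    have key : ∀ k j : ℕ, j ≤ k → ((Finsupp.single (0 : Fin 2) j + Finsupp.single 1 (k - j) =
        Finsupp.single 0 u + Finsupp.single 1 v) ↔ (k = m ∧ j = u)) := by
      intro k j hj
      constructor
      · intro h
        have h0 := DFunLike.congr_fun h 0
        have h1 := DFunLike.congr_fun h 1
        simp at h0 h1
        omega
      · rintro ⟨rfl, rfl⟩
        rw [show k - j = v by omega]
    simp only [MvPolynomial.coeff_sum, MvPolynomial.coeff_monomial]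
    rw [Finset.sum_eq_single m, Finset.sum_eq_single u]
    · rw [if_pos ((key _ _ (by omega)).2 ⟨rfl, rfl⟩)]
    · intro j hj hne
      rw [Finset.mem_range] at hj
      rw [if_neg fun h => hne ((key _ _ (by omega)).1 h).2]
    · intro h; simp at h; omega
    · intro k hk hne
      refine Finset.sum_eq_zero fun j hj => ?_
      rw [Finset.mem_range] at hj
      rw [if_neg fun h => hne ((key _ _ (by omega)).1 h).1]
    · intro h; simp at h

theorem one_exists (h : ∀ n k, stirlingSecond n k = Nat.stirlingSecond n k) (i : ℕ) :
    ∃ Q : MvPolynomial (Fin 2) ℚ, Q.totalDegree ≤ 2 * i + 3 ∧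
      (∀ x y : ℕ, MvPolynomial.eval ![(x : ℚ), (y : ℚ)] Q = POne i x y) ∧
      ∀ u v : ℕ, u + v = 2 * i + 3 →
        MvPolynomial.coeff (Finsupp.single 0 u + Finsupp.single 1 v) Q
          = ((2 * i + 1).doubleFactorial : ℚ) / (u.factorial * v.factorial) := by
  obtain ⟨p, h1, h2, h3⟩ := GG_isP h i
  obtain ⟨Q, k1, k2, k3⟩ := mv_exists p _ h1
  refine ⟨Q, k1, fun x y => ?_, fun u v huv => ?_⟩
  · rw [k2, ← Nat.cast_add, h3, ← GG_eq]; rfl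
  · rw [k3 u v huv, h2, ← huv]
    have := Nat.add_choose_mul_factorial_mul_factorial u v
    have e : ((u + v).choose u : ℚ) * u.factorial * v.factorial = (u + v).factorial := by
      rw [← Nat.choose_symm_add] at this
      exact_mod_cast this
    have := Nat.factorial_ne_zero (u + v)
    have := Nat.factorial_ne_zero u
    have := Nat.factorial_ne_zero v
    field_simp
    rw [← e]

/-- (1) `P_i` agrees at positive integers with a two-variable polynomial of total
degree `2i+3`, whose coefficient of `x^{2a+1} y^{2b}` (for `i = a+b-1`, `a+b ≥ 1`) is
`(2a+2b-1)!!/((2a+1)!(2b)!)`; (2) `P_{i,j}` agrees at positive integers with a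
polynomial in `x` of degree `2i+2j+5`, whose leading coefficient (for `(i,j)=(a,b)`)
is `(2a+1)!!(2b+1)!!/(2a+2b+5)!`. -/
theorem POne_PTwo_polynomial :
    (∀ i : ℕ, ∃ Q : MvPolynomial (Fin 2) ℚ,
      Q.totalDegree = 2 * i + 3 ∧
      ∀ x y : ℕ, 1 ≤ x → 1 ≤ y →
        MvPolynomial.eval ![(x : ℚ), (y : ℚ)] Q = POne i x y) ∧
    (∀ a b : ℕ, 1 ≤ a + b →
      ∃ Q : MvPolynomial (Fin 2) ℚ,
        (∀ x y : ℕ, 1 ≤ x → 1 ≤ y →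
          MvPolynomial.eval ![(x : ℚ), (y : ℚ)] Q = POne (a + b - 1) x y) ∧
        MvPolynomial.coeff (Finsupp.single 0 (2 * a + 1) + Finsupp.single 1 (2 * b)) Q =
          (Nat.doubleFactorial (2 * a + 2 * b - 1) : ℚ) /
            (Nat.factorial (2 * a + 1) * Nat.factorial (2 * b))) ∧
    (∀ a b : ℕ, ∃ Q : Polynomial ℚ,
      (∀ x : ℕ, 1 ≤ x → Q.eval (x : ℚ) = PTwo a b x) ∧
      Q.degree = (2 * a + 2 * b + 5 : ℕ) ∧
      Q.coeff (2 * a + 2 * b + 5) =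
        (Nat.doubleFactorial (2 * a + 1) * Nat.doubleFactorial (2 * b + 1) : ℚ) /
          Nat.factorial (2 * a + 2 * b + 5)) := by
  have h := stirlingSecond_eq
  refine ⟨fun i => ?_, fun a b hab => ?_, fun a b => ?_⟩
  · obtain ⟨Q, h1, h2, h3⟩ := one_exists h i
    refine ⟨Q, le_antisymm h1 ?_, fun x y _ _ => h2 x y⟩
    have hc := h3 (2 * i + 3) 0 (by ring)
    have hne : MvPolynomial.coeff
        (Finsupp.single (0 : Fin 2) (2 * i + 3) + Finsupp.single 1 0) Q ≠ 0 := by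
      rw [hc]
      have := Nat.doubleFactorial_pos (2 * i + 1)
      positivity
    have := MvPolynomial.le_totalDegree (MvPolynomial.mem_support_iff.2 hne)
    rw [Finsupp.sum_fintype _ _ (by simp)] at this
    simpa using this
  · obtain ⟨Q, h1, h2, h3⟩ := one_exists h (a + b - 1)
    refine ⟨Q, fun x y _ _ => h2 x y, ?_⟩
    rw [h3 (2 * a + 1) (2 * b) (by omega),
      show 2 * (a + b - 1) + 1 = 2 * a + 2 * b - 1 by omega]
  · obtain ⟨p, h1, h2, h3⟩ := PTwo_isP h a b
    refine ⟨p, fun x _ => h3 x, ?_, h2⟩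
    refine le_antisymm (Polynomial.natDegree_le_iff_degree_le.1 h1) ?_
    refine Polynomial.le_degree_of_ne_zero ?_
    rw [h2]
    have := Nat.doubleFactorial_pos (2 * a + 1)
    have := Nat.doubleFactorial_pos (2 * b + 1)
    positivity
end
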